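/- Let T > 0, let μ be a real constant, let a_ξ, b_ξ, η : [0,T] → ℝ be continuous with η(t) > 0 for all t, and let D, E, F, G, H, I, L, M, N, O, P, Q : [0,T) → ℝ be differentiable functions satisfying on [0,T): −D′ = −D²/η + μb_ξ²N²; −E′ = −F²/(4η) + 4μb_ξ²M²; −F′ = −DF/η + 4μb_ξ²MN + μ(T−t); −G′ = −DG/η + 2μb_ξ²NP + a_ξF; −H′ = −FG/(2η) + 4μb_ξ²MP + 2a_ξE; −I′ = b_ξ²E − G²/(4η) + μb_ξ²P² + a_ξH; −L′ = D²/η − 2DL/η; −M′ = F²/(4η) − FN/(2η); −N′ = DF/η − (DN+FL)/η; −O′ = (DG − DO − GL)/η + a_ξN; −P′ = (FG − FO − GN)/(2η) + 2a_ξM; −Q′ = G²/(4η) − GO/(2η) + a_ξP + b_ξ²M. Define C(x,ξ,t) = x²D(t) + ξ²E(t) + xξF(t) + xG(t) + ξH(t) + I(t) and f(x,ξ,t) = x²L(t) + ξ²M(t) + xξN(t) + xO(t) + ξP(t) + Q(t). Then for all x, ξ ∈ ℝ and t ∈ [0,T): 0 = (1/2)C_ξξ·b_ξ² + C_ξ·a_ξ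 + C_t − C_x²/(4η) + μ·ξ·x·(T−t) + μ·f_ξ²·b_ξ², and 0 = C_x²/(4η) + (1/2)f_ξξ·b_ξ² + f_ξ·a_ξ − C_x·f_x/(2η) + f_t. -/

import Mathlib

/-- Quadratic ansatz `(x, ξ, t) ↦ x²D(t) + ξ²E(t) + xξF(t) + xG(t) + ξH(t) + I(t)`. -/
noncomputable def quadAnsatz (D E F G H I : ℝ → ℝ) : ℝ → ℝ → ℝ → ℝ :=
  fun x ξ t => x ^ 2 * D t + ξ ^ 2 * E t + x * ξ * F t + x * G t + ξ * H t + I t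

/-- Partial derivative in the first (position) variable. -/
noncomputable def pdX (C : ℝ → ℝ → ℝ → ℝ) (x ξ t : ℝ) : ℝ := deriv (fun y => C y ξ t) x

/-- Partial derivative in the second (market-state) variable. -/
noncomputable def pdXi (C : ℝ → ℝ → ℝ → ℝ) (x ξ t : ℝ) : ℝ := deriv (fun z => C x z t) ξ

/-- Second partial derivative in the second (market-state) variable. -/
noncomputable def pdXiXi (C : ℝ → ℝ → ℝ → ℝ) (x ξ t : ℝ) : ℝ := deriv (fun z => pdXi C x z t) ξ

/-- Partial derivative in the time variable. -/
noncomputable def pdT (C : ℝ → ℝ → ℝ → ℝ) (x ξ t : ℝ) : ℝ := deriv (fun s => C x ξ s) t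

theorem pdX_quadAnsatz (D E F G H I : ℝ → ℝ) (x ξ t : ℝ) :
    pdX (quadAnsatz D E F G H I) x ξ t = 2 * x * D t + ξ * F t + G t := by
  have h : HasDerivAt (fun y : ℝ => y ^ 2 * D t + ξ ^ 2 * E t + y * ξ * F t + y * G t
      + ξ * H t + I t) (2 * x * D t + ξ * F t + G t) x := by
    have i := hasDerivAt_id' x
    refine HasDerivAt.congr_deriv ((((((i.pow 2).mul_const (D t)).add_const (ξ ^ 2 * E t)).add
      ((i.mul_const ξ).mul_const (F t))).add (i.mul_const (G t))).add_const
        (ξ * H t) |>.add_const (I t)) ?_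
    simp
  exact h.deriv

theorem pdXi_quadAnsatz (D E F G H I : ℝ → ℝ) (x ξ t : ℝ) :
    pdXi (quadAnsatz D E F G H I) x ξ t = 2 * ξ * E t + x * F t + H t := by
  have h : HasDerivAt (fun z : ℝ => x ^ 2 * D t + z ^ 2 * E t + x * z * F t + x * G t
      + z * H t + I t) (2 * ξ * E t + x * F t + H t) ξ := by
    have i := hasDerivAt_id' ξ
    refine HasDerivAt.congr_deriv (((((((i.pow 2).mul_const (E t)).const_add (x ^ 2 * D t)).add
      ((i.const_mul x).mul_const (F t))).add_const (x * G t)).add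
        (i.mul_const (H t))).add_const (I t)) ?_
    simp
  exact h.deriv

theorem pdXiXi_quadAnsatz (D E F G H I : ℝ → ℝ) (x ξ t : ℝ) :
    pdXiXi (quadAnsatz D E F G H I) x ξ t = 2 * E t := by
  unfold pdXiXi
  simp only [pdXi_quadAnsatz]
  have h : HasDerivAt (fun z : ℝ => 2 * z * E t + x * F t + H t) (2 * E t) ξ := by
    have i := hasDerivAt_id' ξ
    refine HasDerivAt.congr_deriv ((((i.const_mul 2).mul_const (E t)).add_const (x * F t)).add_const (H t)) ?_
    simp
  exact h.deriv

theorem pdT_quadAnsatz (D E F G H I : ℝ → ℝ) (x ξ t d e f g h i : ℝ)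
    (hD : HasDerivAt D d t) (hE : HasDerivAt E e t) (hF : HasDerivAt F f t)
    (hG : HasDerivAt G g t) (hH : HasDerivAt H h t) (hI : HasDerivAt I i t) :
    pdT (quadAnsatz D E F G H I) x ξ t
      = x ^ 2 * d + ξ ^ 2 * e + x * ξ * f + x * g + ξ * h + i :=
  ((((((hD.const_mul (x ^ 2)).add (hE.const_mul (ξ ^ 2))).add (hF.const_mul (x * ξ))).add
    (hG.const_mul x)).add (hH.const_mul ξ)).add hI).deriv

/-- In the stochastic liquidity/volatility model, if the
coefficient functions `D, …, Q` solve the displayed ODE system on `[0,T)`,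
then the quadratic ansätze `C` and `f` solve the two coupled HJB-type PDEs
for all `x, ξ ∈ ℝ` and `t ∈ [0,T)`. -/
theorem stochastic_vol_ODE_system_implies_HJB
    (T μ : ℝ) (hT : 0 < T)
    (aξ bξ η : ℝ → ℝ)
    (haξ : ContinuousOn aξ (Set.Icc 0 T)) (hbξ : ContinuousOn bξ (Set.Icc 0 T))
    (hη : ContinuousOn η (Set.Icc 0 T))
    (hηpos : ∀ t ∈ Set.Icc (0 : ℝ) T, 0 < η t)
    (D E F G H I L M N O P Q D' E' F' G' H' I' L' M' N' O' P' Q' : ℝ → ℝ)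
    (hD : ∀ t ∈ Set.Ico (0 : ℝ) T, HasDerivAt D (D' t) t)
    (hE : ∀ t ∈ Set.Ico (0 : ℝ) T, HasDerivAt E (E' t) t)
    (hF : ∀ t ∈ Set.Ico (0 : ℝ) T, HasDerivAt F (F' t) t)
    (hG : ∀ t ∈ Set.Ico (0 : ℝ) T, HasDerivAt G (G' t) t)
    (hH : ∀ t ∈ Set.Ico (0 : ℝ) T, HasDerivAt H (H' t) t)
    (hI : ∀ t ∈ Set.Ico (0 : ℝ) T, HasDerivAt I (I' t) t)
    (hL : ∀ t ∈ Set.Ico (0 : ℝ) T, HasDerivAt L (L' t) t)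
    (hM : ∀ t ∈ Set.Ico (0 : ℝ) T, HasDerivAt M (M' t) t)
    (hN : ∀ t ∈ Set.Ico (0 : ℝ) T, HasDerivAt N (N' t) t)
    (hO : ∀ t ∈ Set.Ico (0 : ℝ) T, HasDerivAt O (O' t) t)
    (hP : ∀ t ∈ Set.Ico (0 : ℝ) T, HasDerivAt P (P' t) t)
    (hQ : ∀ t ∈ Set.Ico (0 : ℝ) T, HasDerivAt Q (Q' t) t)
    (hsys : ∀ t ∈ Set.Ico (0 : ℝ) T,
      (-D' t = -(D t) ^ 2 / η t + μ * (bξ t) ^ 2 * (N t) ^ 2) ∧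
      (-E' t = -(F t) ^ 2 / (4 * η t) + 4 * μ * (bξ t) ^ 2 * (M t) ^ 2) ∧
      (-F' t = -D t * F t / η t + 4 * μ * (bξ t) ^ 2 * M t * N t + μ * (T - t)) ∧
      (-G' t = -D t * G t / η t + 2 * μ * (bξ t) ^ 2 * N t * P t + aξ t * F t) ∧
      (-H' t = -F t * G t / (2 * η t) + 4 * μ * (bξ t) ^ 2 * M t * P t
          + 2 * aξ t * E t) ∧
      (-I' t = (bξ t) ^ 2 * E t - (G t) ^ 2 / (4 * η t)
          + μ * (bξ t) ^ 2 * (P t) ^ 2 + aξ t * H t) ∧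
      (-L' t = (D t) ^ 2 / η t - 2 * D t * L t / η t) ∧
      (-M' t = (F t) ^ 2 / (4 * η t) - F t * N t / (2 * η t)) ∧
      (-N' t = D t * F t / η t - (D t * N t + F t * L t) / η t) ∧
      (-O' t = (D t * G t - D t * O t - G t * L t) / η t + aξ t * N t) ∧
      (-P' t = (F t * G t - F t * O t - G t * N t) / (2 * η t)
          + 2 * aξ t * M t) ∧
      (-Q' t = (G t) ^ 2 / (4 * η t) - G t * O t / (2 * η t)
          + aξ t * P t + (bξ t) ^ 2 * M t)) :
    ∀ (x ξ : ℝ), ∀ t ∈ Set.Ico (0 : ℝ) T,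
      (0 = (1 / 2) * pdXiXi (quadAnsatz D E F G H I) x ξ t * (bξ t) ^ 2
          + pdXi (quadAnsatz D E F G H I) x ξ t * aξ t
          + pdT (quadAnsatz D E F G H I) x ξ t
          - (pdX (quadAnsatz D E F G H I) x ξ t) ^ 2 / (4 * η t)
          + μ * ξ * x * (T - t)
          + μ * (pdXi (quadAnsatz L M N O P Q) x ξ t) ^ 2 * (bξ t) ^ 2) ∧
      (0 = (pdX (quadAnsatz D E F G H I) x ξ t) ^ 2 / (4 * η t)
          + (1 / 2) * pdXiXi (quadAnsatz L M N O P Q) x ξ t * (bξ t) ^ 2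
          + pdXi (quadAnsatz L M N O P Q) x ξ t * aξ t
          - pdX (quadAnsatz D E F G H I) x ξ t * pdX (quadAnsatz L M N O P Q) x ξ t
              / (2 * η t)
          + pdT (quadAnsatz L M N O P Q) x ξ t) := by
  intro x ξ t ht
  obtain ⟨h1, h2, h3, h4, h5, h6, h7, h8, h9, h10, h11, h12⟩ := hsys t ht
  have hη0 : η t ≠ 0 := (hηpos t ⟨ht.1, ht.2.le⟩).ne'
  simp only [pdX_quadAnsatz, pdXi_quadAnsatz, pdXiXi_quadAnsatz,
    pdT_quadAnsatz D E F G H I x ξ t _ _ _ _ _ _ (hD t ht) (hE t ht) (hF t ht) (hG t ht)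
      (hH t ht) (hI t ht),
    pdT_quadAnsatz L M N O P Q x ξ t _ _ _ _ _ _ (hL t ht) (hM t ht) (hN t ht) (hO t ht)
      (hP t ht) (hQ t ht)]
  constructor
  · linear_combination x ^ 2 * h1 + ξ ^ 2 * h2 + x * ξ * h3 + x * h4 + ξ * h5 + h6
  · linear_combination x ^ 2 * h7 + ξ ^ 2 * h8 + x * ξ * h9 + x * h10 + ξ * h11 + h12
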